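/- arXiv:2501.01682 — 3 statements merged into one kernel-verified Lean document; each statement's English description precedes it below -/
import Mathlib

section
/- Let K be a field, N a natural number, and A and B two 2×N matrices over K, with Plücker coordinates x_{ij} = A₀ᵢ·A₁ⱼ − A₀ⱼ·A₁ᵢ and y_{ij} = B₀ᵢ·B₁ⱼ − B₀ⱼ·B₁ᵢ. If the span of the rows of A and the span of the rows of B have nonzero intersection in Kᴺ, then for all column indices i, j, s, t one has x_{ij}·y_{st} − x_{is}·y_{jt} + x_{it}·y_{js} + x_{st}·y_{ij} − x_{jt}·y_{is} + x_{js}·y_{it} = 0. -/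
/-! If `v ≠ 0` lies in both row spans, writing `v = a • A 0 + b • A 1 = c • B 0 + d • B 1` gives a
nontrivial linear relation, with coefficients `a, b, -c, -d`, among the rows of `A` stacked on `B`.
Hence each 4×4 minor of the stacked matrix vanishes, and the Laplace expansion of the minor
on columns `i, j, s, t` along its first two rows is the asserted bilinear expression. -/


/-- The equations of the incidence variety of pairs of meeting lines: if the row spans
of two 2×N matrices `A`, `B` over a field intersect nontrivially, then the bilinear
Plücker-type expressions in the coordinates
`x i j = A 0 i * A 1 j - A 0 j * A 1 i` and `y i j = B 0 i * B 1 j - B 0 j * B 1 i`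
all vanish. -/
theorem incidence_relation_of_meeting_spans {K : Type*} [Field K] {N : ℕ}
    (A B : Matrix (Fin 2) (Fin N) K) (x y : Fin N → Fin N → K)
    (hx : ∀ i j, x i j = A 0 i * A 1 j - A 0 j * A 1 i)
    (hy : ∀ i j, y i j = B 0 i * B 1 j - B 0 j * B 1 i)
    (hmeet : Submodule.span K ({A 0, A 1} : Set (Fin N → K)) ⊓
        Submodule.span K ({B 0, B 1} : Set (Fin N → K)) ≠ ⊥)
    (i j s t : Fin N) :
    x i j * y s t - x i s * y j t + x i t * y j s
      + x s t * y i j - x j t * y i s + x j s * y i t = 0 := by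
  obtain ⟨v, hv, hv0⟩ := Submodule.exists_mem_ne_zero_of_ne_bot hmeet
  obtain ⟨hvA, hvB⟩ := Submodule.mem_inf.mp hv
  obtain ⟨a, b, hab⟩ := Submodule.mem_span_pair.mp hvA
  obtain ⟨c, d, hcd⟩ := Submodule.mem_span_pair.mp hvB
  have hrel : ∀ k, a * A 0 k + b * A 1 k = c * B 0 k + d * B 1 k := fun k => by
    simpa using congrFun (hab.trans hcd.symm) k
  have hdet : (!![A 0 i, A 0 j, A 0 s, A 0 t;
                  A 1 i, A 1 j, A 1 s, A 1 t;
                  B 0 i, B 0 j, B 0 s, B 0 t;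
                  B 1 i, B 1 j, B 1 s, B 1 t] : Matrix (Fin 4) (Fin 4) K).det = 0 := by
    rw [← Matrix.exists_vecMul_eq_zero_iff]
    refine ⟨![a, b, -c, -d], fun h => hv0 ?_, ?_⟩
    · have ha : a = 0 := congrFun h 0
      have hb : b = 0 := congrFun h 1
      rw [← hab, ha, hb, zero_smul, zero_smul, add_zero]
    · ext k
      fin_cases k <;> simp [Matrix.vecMul, dotProduct, Fin.sum_univ_four]
      · linear_combination hrel i
      · linear_combination hrel j
      · linear_combination hrel s
      · linear_combination hrel t
  simp [Matrix.det_succ_row_zero, Fin.sum_univ_succ, Fin.succAbove] at hdet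
  simp only [hx, hy]
  linear_combination hdet
end

section
/- Let K be a field, ι a finite index type, and f a multivariate polynomial in variables (Xᵢ)_{i∈ι} over K that is homogeneous of degree d. In the polynomial ring in the doubled variable set (Uᵢ)_{i∈ι} ∪ (Xᵢ)_{i∈ι}, define g to be the result of substituting Xᵢ ↦ Uᵢ + Xᵢ in f, minus f itself (viewed in the X-variables). Then g is homogeneous of degree d in the 2|ι| variables jointly, and g lies in the ideal generated by the variables Uᵢ. -/
/-!
Substituting linear forms for the variables preserves homogeneity, so both terms of the
difference are homogeneous of degree `d`.  Modulo the ideal `(Uᵢ)`, the substitutions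
`Xᵢ ↦ Uᵢ + Xᵢ` and `Xᵢ ↦ Xᵢ` agree on the variables, hence they are equal as algebra
homomorphisms into the quotient, and the difference vanishes there.
-/

open MvPolynomial

/-- Let `f` be a homogeneous polynomial of degree `d` in variables `(Xᵢ)`.  In the
doubled variable set `(Uᵢ) ∪ (Xᵢ)` (the left and right summands of `ι ⊕ ι`), the
difference `g = f(U + X) - f(X)` is homogeneous of degree `d` and lies in the ideal
generated by the variables `Uᵢ`. -/
theorem shift_sub_self_homogeneous_and_mem_span {K : Type*} [Field K] {ι : Type*}
    [Fintype ι] {d : ℕ} (f : MvPolynomial ι K) (hf : f.IsHomogeneous d)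
    (g : MvPolynomial (ι ⊕ ι) K)
    (hg : g = aeval (fun i => (X (Sum.inl i) + X (Sum.inr i) : MvPolynomial (ι ⊕ ι) K)) f
        - rename Sum.inr f) :
    g.IsHomogeneous d ∧
      g ∈ Ideal.span (Set.range fun i : ι => (X (Sum.inl i) : MvPolynomial (ι ⊕ ι) K)) := by
  subst hg
  constructor
  · refine IsHomogeneous.sub ?_ hf.rename_isHomogeneous
    simpa using hf.aeval _ (n := 1) fun i =>
      (isHomogeneous_X K (Sum.inl i)).add (isHomogeneous_X K (Sum.inr i))
  · set I := Ideal.span (Set.range fun i : ι => (X (Sum.inl i) : MvPolynomial (ι ⊕ ι) K))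
    have h : (Ideal.Quotient.mkₐ K I).comp
          (aeval fun i => (X (Sum.inl i) + X (Sum.inr i) : MvPolynomial (ι ⊕ ι) K)) =
        (Ideal.Quotient.mkₐ K I).comp (rename Sum.inr) := by
      ext i
      have hU : Ideal.Quotient.mk I (X (Sum.inl i)) = 0 :=
        Ideal.Quotient.eq_zero_iff_mem.mpr (Ideal.subset_span ⟨i, rfl⟩)
      simp [hU]
    exact Ideal.Quotient.eq.mp (DFunLike.congr_fun h f)
end

section
/- Let n ≥ 4 and let F ∈ ℂ[x₀, …, x_n] be the cubic form F = x₂x₀² + x₃x₁² + Σ_{2≤i,j≤n} xᵢxⱼ·(a⁰_{ij}x₀ + a¹_{ij}x₁) + C(x₂, …, x_n), where a⁰_{ij} = a⁰_{ji} and a¹_{ij} = a¹_{ji} are complex scalars and C is a homogeneous cubic in x₂, …, x_n. Suppose v = (v₄, …, v_n) is a vector of complex numbers satisfying Σ_{4≤i,j≤n} a⁰_{ij}vᵢvⱼ = 0 and Σ_{4≤i,j≤n} a¹_{ij}vᵢvⱼ = 0 (which holds in particular when Σ_{4≤j≤n} a⁰_{ij}vⱼ = 0 and Σ_{4≤j≤n}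 a¹_{ij}vⱼ = 0 for every i). Then one has the polynomial identity in λ, μ, t: F(λ, μ, 0, 0, t·v₄, …, t·v_n) = t³·C(0, 0, v₄, …, v_n). Consequently, the restriction of F to the plane spanned by the line {x₂ = ⋯ = x_n = 0} and the point with coordinates (0,0,0,0,v₄,…,v_n) is either identically zero or vanishes exactly to order three along the line. -/
/-!
The coordinates of the point `(lam, mu, 0, 0, t·v₄, …, t·vₙ)` agree with those of `t·v` in every
index `≥ 2`.  Hence the monomials `x₂x₀²` and `x₃x₁²` vanish, the cubic form `C(x₂, …, xₙ)` takes
the value `t³ C(v)` by homogeneity (`eval_of_homogeneous_cubic`), and each of the two quadratic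
forms contributes `t²` times its value at `v`; as `v` is supported in indices `≥ 4`, that value is
the sum over `4 ≤ i, j` (`quadratic_sum_eq`), which vanishes by hypothesis.
-/

open MvPolynomial Finset

theorem quadratic_sum_eq {n : ℕ} (a : Fin (n + 1) → Fin (n + 1) → ℂ) (v : Fin (n + 1) → ℂ)
    (hv : ∀ i : Fin (n + 1), (i : ℕ) < 4 → v i = 0) :
    ∑ i ∈ univ.filter (fun i : Fin (n + 1) => 2 ≤ (i : ℕ)),
        ∑ j ∈ univ.filter (fun j : Fin (n + 1) => 2 ≤ (j : ℕ)), a i j * v i * v j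
      = ∑ i ∈ univ.filter (fun i : Fin (n + 1) => 4 ≤ (i : ℕ)),
        ∑ j ∈ univ.filter (fun j : Fin (n + 1) => 4 ≤ (j : ℕ)), a i j * v i * v j := by
  have hsub : univ.filter (fun i : Fin (n + 1) => 4 ≤ (i : ℕ))
      ⊆ univ.filter (fun i : Fin (n + 1) => 2 ≤ (i : ℕ)) := by
    intro i
    simp only [mem_filter, mem_univ, true_and]
    omega
  have hzero : ∀ i : Fin (n + 1), i ∉ univ.filter (fun i : Fin (n + 1) => 4 ≤ (i : ℕ)) →
      v i = 0 := by
    intro i hi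
    simp only [mem_filter, mem_univ, true_and, not_le] at hi
    exact hv i hi
  symm
  rw [sum_subset hsub (fun i _ hi => by simp [hzero i hi])]
  exact sum_congr rfl fun i _ => sum_subset hsub (fun j _ hj => by simp [hzero j hj])

/-- A form of degree three, evaluated at a point that is `t • v` in the variables that occur
in the form. -/
theorem eval_of_homogeneous_cubic {σ : Type*} {p : MvPolynomial σ ℂ} (hp : p.IsHomogeneous 3)
    (w v : σ → ℂ) (t : ℂ) (hw : ∀ k ∈ p.vars, w k = t * v k) :
    eval w p = t ^ 3 * eval v p := by
  have h1 : eval w p = eval (fun k => t * v k) p :=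
    eval₂Hom_congr' rfl (fun k hk _ => hw k hk) rfl
  rw [h1, eval_eq, eval_eq, mul_sum]
  refine sum_congr rfl fun d hd => ?_
  have hdeg : ∑ k ∈ d.support, d k = 3 := by
    rw [← hp (mem_support_iff.mp hd), Finsupp.weight_apply]
    simp [Finsupp.sum]
  simp only [mul_pow, prod_mul_distrib, prod_pow_eq_pow_sum, hdeg]
  ring

/-- Normal form of a cubic along a line of the second type: let
`F = x₂x₀² + x₃x₁² + ∑_{2 ≤ i,j ≤ n} xᵢxⱼ(a⁰ᵢⱼx₀ + a¹ᵢⱼx₁) + C(x₂,…,xₙ)` with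
`a⁰`, `a¹` symmetric and `C` a homogeneous cubic in `x₂,…,xₙ`.  If `v` is supported
in coordinates `≥ 4` and satisfies `∑_{4 ≤ i,j} a⁰ᵢⱼvᵢvⱼ = 0` and
`∑_{4 ≤ i,j} a¹ᵢⱼvᵢvⱼ = 0`, then
`F(λ, μ, 0, 0, t·v₄, …, t·vₙ) = t³ · C(0, 0, v₄, …, vₙ)` identically. -/
theorem cubic_restrict_to_plane_of_higher_triple_line {n : ℕ} (hn : 4 ≤ n)
    (a0 a1 : Fin (n + 1) → Fin (n + 1) → ℂ)
    (hsym0 : ∀ i j, a0 i j = a0 j i) (hsym1 : ∀ i j, a1 i j = a1 j i)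
    (Cpoly : MvPolynomial (Fin (n + 1)) ℂ)
    (hC3 : Cpoly.IsHomogeneous 3) (hCvars : ∀ k ∈ Cpoly.vars, 2 ≤ (k : ℕ))
    (F : MvPolynomial (Fin (n + 1)) ℂ)
    (hF : F = X 2 * X 0 ^ 2 + X 3 * X 1 ^ 2
      + (∑ i ∈ univ.filter (fun i : Fin (n + 1) => 2 ≤ (i : ℕ)),
          ∑ j ∈ univ.filter (fun j : Fin (n + 1) => 2 ≤ (j : ℕ)),
            X i * X j * (C (a0 i j) * X 0 + C (a1 i j) * X 1))
      + Cpoly)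
    (v : Fin (n + 1) → ℂ) (hv : ∀ i : Fin (n + 1), (i : ℕ) < 4 → v i = 0)
    (hq0 : ∑ i ∈ univ.filter (fun i : Fin (n + 1) => 4 ≤ (i : ℕ)),
        ∑ j ∈ univ.filter (fun j : Fin (n + 1) => 4 ≤ (j : ℕ)),
          a0 i j * v i * v j = 0)
    (hq1 : ∑ i ∈ univ.filter (fun i : Fin (n + 1) => 4 ≤ (i : ℕ)),
        ∑ j ∈ univ.filter (fun j : Fin (n + 1) => 4 ≤ (j : ℕ)),
          a1 i j * v i * v j = 0) :
    ∀ lam mu t : ℂ,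
      eval (fun k : Fin (n + 1) =>
        if (k : ℕ) = 0 then lam else if (k : ℕ) = 1 then mu else t * v k) F
        = t ^ 3 * eval v Cpoly := by
  intro lam mu t
  have h2 : ((2 : Fin (n + 1)) : ℕ) = 2 := Nat.mod_eq_of_lt (show 2 < n + 1 by omega)
  have h3 : ((3 : Fin (n + 1)) : ℕ) = 3 := Nat.mod_eq_of_lt (show 3 < n + 1 by omega)
  have h0 : ((0 : Fin (n + 1)) : ℕ) = 0 := rfl
  have h1 : ((1 : Fin (n + 1)) : ℕ) = 1 := Nat.mod_eq_of_lt (show 1 < n + 1 by omega)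
  set w : Fin (n + 1) → ℂ := fun k =>
    if (k : ℕ) = 0 then lam else if (k : ℕ) = 1 then mu else t * v k with hw
  have hw0 : w 0 = lam := by simp [hw]
  have hw1 : w 1 = mu := by simp only [hw, h1]; simp
  have hwk : ∀ k : Fin (n + 1), 2 ≤ (k : ℕ) → w k = t * v k := by
    intro k hk
    simp only [hw]
    rw [if_neg (by omega), if_neg (by omega)]
  have hw2 : w 2 = 0 := by rw [hwk 2 (by omega), hv 2 (by omega), mul_zero]
  have hw3 : w 3 = 0 := by rw [hwk 3 (by omega), hv 3 (by omega), mul_zero]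
  have hC := eval_of_homogeneous_cubic hC3 w v t (fun k hk => hwk k (hCvars k hk))
  have hQ : ∑ i ∈ univ.filter (fun i : Fin (n + 1) => 2 ≤ (i : ℕ)),
      ∑ j ∈ univ.filter (fun j : Fin (n + 1) => 2 ≤ (j : ℕ)),
        w i * w j * (a0 i j * lam + a1 i j * mu) = 0 := by
    rw [← quadratic_sum_eq a0 v hv] at hq0
    rw [← quadratic_sum_eq a1 v hv] at hq1
    trans t ^ 2 * lam * ∑ i ∈ univ.filter (fun i : Fin (n + 1) => 2 ≤ (i : ℕ)),
          ∑ j ∈ univ.filter (fun j : Fin (n + 1) => 2 ≤ (j : ℕ)), a0 i j * v i * v j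
        + t ^ 2 * mu * ∑ i ∈ univ.filter (fun i : Fin (n + 1) => 2 ≤ (i : ℕ)),
          ∑ j ∈ univ.filter (fun j : Fin (n + 1) => 2 ≤ (j : ℕ)), a1 i j * v i * v j
    · simp only [mul_sum, ← sum_add_distrib]
      refine sum_congr rfl fun i hi => sum_congr rfl fun j hj => ?_
      rw [hwk i (mem_filter.mp hi).2, hwk j (mem_filter.mp hj).2]
      ring
    · rw [hq0, hq1]
      ring
  rw [hF]
  simp only [map_add, map_sum, map_mul, map_pow, eval_X, eval_C, hw0, hw1, hw2, hw3, hQ, hC]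
  ring
end
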